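/- arXiv:1708.06237 — 2 statements merged into one kernel-verified Lean document; each statement's English description precedes it below -/
import Mathlib

section
/- There exists a closed magic knight's tour of the 4×4×4 cube, i.e. a bijection T : {0,1,2,3}³ → {1,…,64} in which consecutive numbers (and also 64 and 1) occupy cells joined by a 3-dimensional knight's move, and every one of the 48 axis-parallel lines of 4 cells has labels summing to 130. -/
/-!
The statement is proved by exhibiting a tour, whose defining properties are finite checks.

The tour is invariant under the half-turn `σ (x, y, z) = (3 - x, 3 - y, z)`, in the
sense that `T (σ c) = T c + 32` modulo 64. It is therefore determined by its first 32 cells, which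
meet every orbit `{c, σ c}` exactly once and end a knight's move away from `σ` of the first cell;
closedness is then automatic. The magic condition forces every line to contain two labels from
`1, …, 32` and two from `33, …, 64`.
-/

/-- A cell of the 4×4×4 cube: a triple of coordinates in {0,1,2,3}. -/
abbrev Cell : Type := Fin 3 → Fin 4

/-- Two cells are joined by a 3-dimensional knight's move when the absolute
coordinate differences are 1 and 2 in two coordinates and 0 in the third. -/
def KnightMove (p q : Cell) : Prop :=
  ({|(p 0 : ℤ) - (q 0 : ℤ)|, |(p 1 : ℤ) - (q 1 : ℤ)|, |(p 2 : ℤ) - (q 2 : ℤ)|} : Multiset ℤ)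
    = ({0, 1, 2} : Multiset ℤ)

/-- The label in {1,…,64} that the tour `T` assigns to a cell. -/
def tourLabel (T : Cell ≃ Fin 64) (c : Cell) : ℕ := (T c : ℕ) + 1

/-- `T` is a knight's tour: consecutive labels occupy cells joined by a knight's move. -/
def IsTour (T : Cell ≃ Fin 64) : Prop :=
  ∀ i : Fin 64, (i : ℕ) < 63 → KnightMove (T.symm i) (T.symm (i + 1))

/-- The tour is closed: the cells labelled 64 and 1 are joined by a knight's move. -/
def IsClosedTour (T : Cell ≃ Fin 64) : Prop :=
  KnightMove (T.symm 63) (T.symm 0)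

/-- The tour is magic: every axis-parallel line of 4 cells has labels summing to 130. -/
def IsMagic (T : Cell ≃ Fin 64) : Prop :=
  ∀ (a : Fin 3) (c : Cell), ∑ v : Fin 4, tourLabel T (Function.update c a v) = 130

/-- The label minus one of each cell, as an array indexed by the three coordinates in order. -/
def magicLabel : Fin 4 → Fin 4 → Fin 4 → Fin 64 :=
  ![![![41, 18, 5, 62],
       ![6, 61, 42, 17],
       ![57, 46, 21, 2],
       ![22, 1, 58, 45]],
     ![![24, 15, 52, 35],
       ![55, 32, 27, 12],
       ![8, 51, 36, 31],
       ![39, 28, 11, 48]],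
     ![![7, 60, 43, 16],
       ![40, 19, 4, 63],
       ![23, 0, 59, 44],
       ![56, 47, 20, 3]],
     ![![54, 33, 26, 13],
       ![25, 14, 53, 34],
       ![38, 29, 10, 49],
       ![9, 50, 37, 30]]]

/-- The cells in the order in which the tour visits them, the cell `(x, y, z)` being encoded by the
number `16 * x + 4 * y + z`. -/
def magicPathCode : Fin 64 → ℕ :=
  ![41, 13, 11, 47, 38, 2, 4, 32, 24, 60, 58, 30, 23, 51, 53, 17,
     35, 7, 1, 37, 46, 10, 12, 40, 16, 52, 50, 22, 29, 57, 63, 27,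
     21, 49, 55, 19, 26, 62, 56, 28, 36, 0, 6, 34, 43, 15, 9, 45,
     31, 59, 61, 25, 18, 54, 48, 20, 44, 8, 14, 42, 33, 5, 3, 39]

/-- The cells in the order in which the tour visits them, decoded from `magicPathCode`. -/
def magicPath (i : Fin 64) : Cell :=
  ![Fin.ofNat 4 (magicPathCode i / 16), Fin.ofNat 4 (magicPathCode i / 4),
    Fin.ofNat 4 (magicPathCode i)]

/-- The tour as a bijection: `magicPath` lists the cells in increasing order of `magicLabel`. -/
def magicTour : Cell ≃ Fin 64 where
  toFun c := magicLabel (c 0) (c 1) (c 2)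
  invFun := magicPath
  left_inv c := by
    have h : ∀ x y z : Fin 4, magicPath (magicLabel x y z) = ![x, y, z] := by decide +kernel
    rw [h]
    ext i
    fin_cases i <;> rfl
  right_inv := by
    have h : ∀ i, magicLabel (magicPath i 0) (magicPath i 1) (magicPath i 2) = i := by
      decide +kernel
    exact h

/-- The 48 line sums, in coordinates. -/
theorem magicLabel_line_sums : ∀ x y : Fin 4,
    ∑ v, ((magicLabel v x y : ℕ) + 1) = 130 ∧
    ∑ v, ((magicLabel x v y : ℕ) + 1) = 130 ∧
    ∑ v, ((magicLabel x y v : ℕ) + 1) = 130 := by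
  decide +kernel

instance (p q : Cell) : Decidable (KnightMove p q) :=
  inferInstanceAs (Decidable (_ = _))

/-- There exists a closed magic knight's tour of the 4×4×4 cube. -/
theorem exists_closed_magic_knight_tour :
    ∃ T : Cell ≃ Fin 64, IsTour T ∧ IsClosedTour T ∧ IsMagic T := by
  refine ⟨magicTour, ?_, ?_, ?_⟩
  · change ∀ i : Fin 64, (i : ℕ) < 63 → KnightMove (magicPath i) (magicPath (i + 1))
    decide +kernel
  · change KnightMove (magicPath 63) (magicPath 0)
    decide +kernel
  · intro a c
    fin_cases a
    · exact (magicLabel_line_sums (c 1) (c 2)).1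
    · exact (magicLabel_line_sums (c 0) (c 2)).2.1
    · exact (magicLabel_line_sums (c 0) (c 1)).2.2
end

section
/- There exists an open magic knight's tour of the 4×4×4 cube, i.e. a magic knight's tour in which the cells numbered 64 and 1 are not joined by a knight's move. -/
/-- The images, under the linear part of the tour, of the binary digits `2 ^ k` of the time. -/
def tourColumn : Fin 6 → Cell :=
  ![![0, 2, 1], ![2, 3, 1], ![3, 3, 0], ![3, 2, 3], ![2, 2, 0], ![2, 1, 3]]

/-- The cell visited at time `n`, for `n = 0, …, 63`: the affine map `n ↦ (3,3,2) + ∑ columns`,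
the sum being a coordinatewise xor over the binary digits of `n` that are 1. -/
def tourCell (n : Fin 64) : Cell := fun i =>
  (List.finRange 6).foldl
    (fun a (k : Fin 6) => if (n : ℕ).testBit (k : ℕ) then a ^^^ tourColumn k i else a)
    ((![3, 3, 2] : Cell) i)

/-- The time at which the cell `(x, y, z)` is visited, entered at layer `x`, row `y`, column `z`:
the inverse of `tourCell`. -/
def tourTime (c : Cell) : Fin 64 :=
  (![![![26, 39,  4, 57],
      ![53,  8, 43, 22],
      ![38, 27, 56,  5],
      ![ 9, 52, 23, 42]],
    ![![33, 28, 63,  2],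
      ![14, 51, 16, 45],
      ![29, 32,  3, 62],
      ![50, 15, 44, 17]],
    ![![54, 11, 40, 21],
      ![25, 36,  7, 58],
      ![10, 55, 20, 41],
      ![37, 24, 59,  6]],
    ![![13, 48, 19, 46],
      ![34, 31, 60,  1],
      ![49, 12, 47, 18],
      ![30, 35,  0, 61]]] : Fin 4 → Fin 4 → Fin 4 → Fin 64)
    (c 0) (c 1) (c 2)

lemma cell_eta (c : Cell) : c = ![c 0, c 1, c 2] := by
  ext i
  fin_cases i <;> rfl

lemma tourCell_tourTime (c : Cell) : tourCell (tourTime c) = c := by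
  have h : ∀ x y z : Fin 4, tourCell (tourTime ![x, y, z]) = ![x, y, z] := by decide +kernel
  rw [cell_eta c]
  exact h _ _ _

lemma tourTime_tourCell (n : Fin 64) : tourTime (tourCell n) = n := by
  have h : ∀ n : Fin 64, tourTime (tourCell n) = n := by decide +kernel
  exact h n

/-- The tour as a bijection from cells to zero-based labels. -/
def openTour : Cell ≃ Fin 64 where
  toFun := tourTime
  invFun := tourCell
  left_inv := tourCell_tourTime
  right_inv := tourTime_tourCell

lemma openTour_isTour : IsTour openTour := by
  unfold IsTour
  decide +kernel

lemma openTour_not_isClosedTour : ¬ IsClosedTour openTour := by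
  unfold IsClosedTour
  decide +kernel

lemma openTour_isMagic : IsMagic openTour := by
  have h : ∀ (a : Fin 3) (x y z : Fin 4),
      ∑ v : Fin 4, tourLabel openTour (Function.update ![x, y, z] a v) = 130 := by
    decide +kernel
  intro a c
  rw [cell_eta c]
  exact h a _ _ _

/-- There exists an open magic knight's tour of the 4×4×4 cube. -/
theorem exists_open_magic_knight_tour :
    ∃ T : Cell ≃ Fin 64, IsTour T ∧ ¬ IsClosedTour T ∧ IsMagic T :=
  ⟨openTour, openTour_isTour, openTour_not_isClosedTour, openTour_isMagic⟩
end
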